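/- Let 0 < p < +∞. Let μ and ν be non-negative Borel measures on I = (a,b) ⊆ ℝ and let w, u ∈ B⁺(I). Then the best (least) constant c in the inequality ‖gw‖_{p,(a,b),μ} ≤ c ‖u(x) ‖g‖_{∞,(x,b),μ}‖_{∞,(a,b),ν} over all g ∈ B⁺(I) not μ-a.e. equal to 0 equals exactly ( ∫_{(a,b)} ( w(x) / ‖u‖_{∞,(a,x),ν} )^p dμ(x) )^{1/p}; that is, sup over such g of ‖gw‖_{p,(a,b),μ} / ‖u(x)‖g‖_{∞,(x,b),μ}‖_{∞,(a,b),ν} = ( ∫_{(a,b)} ( w(x)/‖u‖_{∞,(a,x),ν} )^p dμ(x) )^{1/p}. -/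

import Mathlib

/-!
Write `U t = ‖u‖_{∞,(a,t),ν}` and let `R` be the right-hand side belonging to `g`.

Upper bound: for `μ`-almost every `t` one has `g t ≤ ‖g‖_{∞,(x,b),μ}` for all `x < t`
simultaneously (by monotonicity in `x`, rational endpoints suffice), so `g t * u x ≤ R` for
`ν`-almost every `x < t`, that is `g t * U t ≤ R` (`ae_mul_eSup_le_RHSsup`).  Hence
`g * w ≤ R * (w / U)` almost everywhere whenever `R` and the claimed constant are finite, and this
is integrated.

Sharpness: `g = 1 / U` satisfies `R ≤ 1`, because for `ν`-almost every `x` one has `u x ≤ U t` for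
all `t > x` (`RHSsup_inv_le_one`), while the left-hand side for this `g` is the claimed constant.
-/


open MeasureTheory Set ENNReal

noncomputable section

/-- The `μ`-essential supremum of `f` over `E`:
`‖f‖_{∞,E,μ} = sup {α : μ({y ∈ E : f y ≥ α}) > 0}`. -/
def eSup (μ : Measure ℝ) (E : Set ℝ) (f : ℝ → ℝ≥0∞) : ℝ≥0∞ :=
  sSup {α : ℝ≥0∞ | 0 < μ {y | y ∈ E ∧ α ≤ f y}}

/-- `‖f‖_{p,E,μ}` for `0 < p ≤ ∞`. -/
def Nrm (p : ℝ≥0∞) (μ : Measure ℝ) (E : Set ℝ) (f : ℝ → ℝ≥0∞) : ℝ≥0∞ :=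
  if p = ⊤ then eSup μ E f
  else (∫⁻ x in E, f x ^ p.toReal ∂μ) ^ (1 / p.toReal)

/-- `‖u(x) ‖g‖_{∞,(x,b),μ}‖_{∞,(a,b),ν}`. -/
def RHSsup (a b : ℝ) (μ ν : Measure ℝ) (u g : ℝ → ℝ≥0∞) : ℝ≥0∞ :=
  eSup ν (Ioo a b) (fun x => u x * eSup μ (Ioo x b) g)

/-- A function is bounded by its essential supremum almost everywhere; no finiteness of `μ` is
needed, since countably many (rational) levels suffice. -/
lemma ae_le_eSup (μ : Measure ℝ) (E : Set ℝ) (f : ℝ → ℝ≥0∞) :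
    ∀ᵐ x ∂μ, x ∈ E → f x ≤ eSup μ E f := by
  have h : ∀ᵐ x ∂μ, ∀ q : ℚ, eSup μ E f < (Real.toNNReal q : ℝ≥0∞) →
      ¬ (x ∈ E ∧ (Real.toNNReal q : ℝ≥0∞) ≤ f x) := by
    rw [ae_all_iff]
    intro q
    by_cases hq : eSup μ E f < (Real.toNNReal q : ℝ≥0∞)
    · have h0 : μ {y | y ∈ E ∧ (Real.toNNReal q : ℝ≥0∞) ≤ f y} = 0 := by
        by_contra hne
        exact absurd hq (not_lt.2 (le_sSup (pos_iff_ne_zero.2 hne)))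
      have h1 : ∀ᵐ x ∂μ, ¬ (x ∈ E ∧ (Real.toNNReal q : ℝ≥0∞) ≤ f x) := by
        rw [ae_iff]
        simpa using h0
      filter_upwards [h1] with x hx _ using hx
    · exact Filter.Eventually.of_forall fun x hx => absurd hx hq
  filter_upwards [h] with x hx hxE
  by_contra hlt
  obtain ⟨q, _, hq1, hq2⟩ := ENNReal.lt_iff_exists_rat_btwn.1 (not_le.1 hlt)
  exact hx q hq1 ⟨hxE, hq2.le⟩

lemma eSup_le_of_ae {μ : Measure ℝ} {E : Set ℝ} {f : ℝ → ℝ≥0∞} {c : ℝ≥0∞}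
    (h : ∀ᵐ x ∂μ, x ∈ E → f x ≤ c) : eSup μ E f ≤ c := by
  refine sSup_le fun α hα => ?_
  by_contra hc
  refine (ne_of_gt hα) (measure_mono_null ?_ (ae_iff.1 h))
  rintro y ⟨hy, hαy⟩ hcon
  exact hc (hαy.trans (hcon hy))

/-- Multiplication by a constant, in the form needed here; `c = ∞` is allowed. -/
lemma mul_eSup_le_of_ae {μ : Measure ℝ} {E : Set ℝ} {f : ℝ → ℝ≥0∞} {c R : ℝ≥0∞}
    (h : ∀ᵐ x ∂μ, x ∈ E → c * f x ≤ R) : c * eSup μ E f ≤ R := by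
  rw [eSup, ENNReal.mul_sSup]
  refine iSup₂_le fun α hα => ?_
  by_contra hc
  refine (ne_of_gt hα) (measure_mono_null ?_ (ae_iff.1 h))
  rintro y ⟨hy, hαy⟩ hcon
  exact hc ((mul_le_mul_right hαy c).trans (hcon hy))

lemma eSup_mono_set {μ : Measure ℝ} {E F : Set ℝ} (hEF : E ⊆ F) (f : ℝ → ℝ≥0∞) :
    eSup μ E f ≤ eSup μ F f := by
  refine sSup_le_sSup fun α hα => lt_of_lt_of_le hα (measure_mono ?_)
  rintro y ⟨hy, h⟩
  exact ⟨hEF hy, h⟩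

/-- One null set of points `x` serves all intervals `(a,t)` with `x < t`. -/
lemma ae_forall_le_eSup_left (a : ℝ) (ν : Measure ℝ) (u : ℝ → ℝ≥0∞) :
    ∀ᵐ x ∂ν, a < x → ∀ t, x < t → u x ≤ eSup ν (Ioo a t) u := by
  have h : ∀ᵐ x ∂ν, ∀ q : ℚ, x ∈ Ioo a (q : ℝ) → u x ≤ eSup ν (Ioo a (q : ℝ)) u :=
    ae_all_iff.2 fun q => ae_le_eSup ν _ u
  filter_upwards [h] with x hx hax t hxt
  obtain ⟨q, h1, h2⟩ := exists_rat_btwn hxt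
  exact (hx q ⟨hax, h1⟩).trans (eSup_mono_set (Ioo_subset_Ioo_right h2.le) u)

/-- One null set of points `t` serves all intervals `(x,b)` with `x < t`. -/
lemma ae_forall_le_eSup_right (b : ℝ) (μ : Measure ℝ) (g : ℝ → ℝ≥0∞) :
    ∀ᵐ t ∂μ, t < b → ∀ x, x < t → g t ≤ eSup μ (Ioo x b) g := by
  have h : ∀ᵐ t ∂μ, ∀ q : ℚ, t ∈ Ioo (q : ℝ) b → g t ≤ eSup μ (Ioo (q : ℝ) b) g :=
    ae_all_iff.2 fun q => ae_le_eSup μ _ g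
  filter_upwards [h] with t ht htb x hxt
  obtain ⟨q, h1, h2⟩ := exists_rat_btwn hxt
  exact (ht q ⟨h2, htb⟩).trans (eSup_mono_set (Ioo_subset_Ioo_left h1.le) g)

/-- Interchanging the two essential suprema: the right-hand side of the inequality dominates
`g(t) ‖u‖_{∞,(a,t),ν}` for `μ`-almost every `t`. -/
lemma ae_mul_eSup_le_RHSsup (a b : ℝ) (μ ν : Measure ℝ) (u g : ℝ → ℝ≥0∞) :
    ∀ᵐ t ∂μ, t ∈ Ioo a b → g t * eSup ν (Ioo a t) u ≤ RHSsup a b μ ν u g := by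
  filter_upwards [ae_forall_le_eSup_right b μ g] with t ht htI
  refine mul_eSup_le_of_ae ?_
  filter_upwards [ae_le_eSup ν (Ioo a b) (fun x => u x * eSup μ (Ioo x b) g)] with x hx hxt
  refine le_trans ?_ (hx ⟨hxt.1, hxt.2.trans htI.2⟩)
  rw [mul_comm]
  exact mul_le_mul_right (ht htI.2 x hxt.2) _

/-- The extremal function `t ↦ 1 / ‖u‖_{∞,(a,t),ν}` has right-hand side at most `1`. -/
lemma RHSsup_inv_le_one (a b : ℝ) (μ ν : Measure ℝ) (u : ℝ → ℝ≥0∞) :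
    RHSsup a b μ ν u (fun t => (eSup ν (Ioo a t) u)⁻¹) ≤ 1 := by
  refine eSup_le_of_ae ?_
  filter_upwards [ae_forall_le_eSup_left a ν u] with x hx hxI
  refine mul_eSup_le_of_ae (Filter.Eventually.of_forall fun t ht => ?_)
  calc u x * (eSup ν (Ioo a t) u)⁻¹
      ≤ eSup ν (Ioo a t) u * (eSup ν (Ioo a t) u)⁻¹ :=
        mul_le_mul_left (hx hxI.1 t ht.1) _
    _ ≤ 1 := ENNReal.mul_inv_le_one _

/-- Remark 3.7, case `0 < p < ∞`, `q = ∞`: the best constant in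
`‖gw‖_{p,(a,b),μ} ≤ c ‖u(x) ‖g‖_{∞,(x,b),μ}‖_{∞,(a,b),ν}` over all `g ∈ B⁺((a,b))`
not `μ`-a.e. equal to `0`, i.e. the supremum of the corresponding ratios, is exactly
`(∫_{(a,b)} (w(x)/‖u‖_{∞,(a,x),ν})^p dμ(x))^{1/p}`. -/
theorem statement16 (p : ℝ≥0∞) (hp : 0 < p) (hp' : p ≠ ⊤) (a b : ℝ) (hab : a < b)
    (μ ν : Measure ℝ) (w u : ℝ → ℝ≥0∞) (hw : Measurable w) (hu : Measurable u) :
    sSup {z : ℝ≥0∞ | ∃ g : ℝ → ℝ≥0∞, Measurable g ∧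
        ¬ (∀ᵐ t ∂μ.restrict (Ioo a b), g t = 0) ∧
        z = Nrm p μ (Ioo a b) (fun t => g t * w t) / RHSsup a b μ ν u g} =
      (∫⁻ x in Ioo a b, (w x / eSup ν (Ioo a x) u) ^ p.toReal ∂μ) ^ (1 / p.toReal) := by
  have hr : 0 < p.toReal := ENNReal.toReal_pos hp.ne' hp'
  have hr' : 0 < 1 / p.toReal := one_div_pos.2 hr
  have hU : Measurable fun t => eSup ν (Ioo a t) u :=
    Monotone.measurable fun s t hst => eSup_mono_set (Ioo_subset_Ioo_right hst) u
  apply le_antisymm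
  · refine sSup_le ?_
    rintro z ⟨g, hg, -, rfl⟩
    set R := RHSsup a b μ ν u g with hR
    set J := ∫⁻ x in Ioo a b, (w x / eSup ν (Ioo a x) u) ^ p.toReal ∂μ with hJ
    by_cases hRtop : R = ⊤
    · simp [hRtop]
    by_cases hJtop : J = ⊤
    · simp [hJtop, ENNReal.top_rpow_of_pos, hr]
    -- Finiteness of the integral forces `w = 0` almost everywhere on `{U = 0}`.
    have hfin : ∀ᵐ x ∂μ.restrict (Ioo a b),
        (w x / eSup ν (Ioo a x) u) ^ p.toReal < ⊤ :=
      ae_lt_top ((hw.div hU).pow_const _) hJtop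
    have hae : ∀ᵐ t ∂μ.restrict (Ioo a b), g t * eSup ν (Ioo a t) u ≤ R :=
      (ae_restrict_iff' measurableSet_Ioo).2 (ae_mul_eSup_le_RHSsup a b μ ν u g)
    have key : ∀ᵐ t ∂μ.restrict (Ioo a b),
        (g t * w t) ^ p.toReal ≤ R ^ p.toReal * (w t / eSup ν (Ioo a t) u) ^ p.toReal := by
      filter_upwards [hfin, hae] with t h1 h2
      rw [← ENNReal.mul_rpow_of_nonneg _ _ hr.le]
      refine ENNReal.rpow_le_rpow ?_ hr.le
      generalize eSup ν (Ioo a t) u = V at h1 h2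
      by_cases hV0 : V = 0
      · have hw0 : w t = 0 := by
          by_contra hne
          simp [hV0, ENNReal.div_zero hne, ENNReal.top_rpow_of_pos hr] at h1
        simp [hw0]
      by_cases hVt : V = ⊤
      · have hg0 : g t = 0 := by
          by_contra hne
          rw [hVt, ENNReal.mul_top hne] at h2
          exact hRtop (top_le_iff.1 h2)
        simp [hg0]
      calc g t * w t = g t * V * (w t / V) := by
            rw [mul_assoc, ENNReal.mul_div_cancel hV0 hVt]
        _ ≤ R * (w t / V) := mul_le_mul_left h2 _
    have hint : ∫⁻ t in Ioo a b, (g t * w t) ^ p.toReal ∂μ ≤ R ^ p.toReal * J := by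
      rw [hJ, ← lintegral_const_mul' _ _ (ENNReal.rpow_ne_top_of_nonneg hr.le hRtop)]
      exact lintegral_mono_ae key
    refine ENNReal.div_le_of_le_mul ?_
    rw [Nrm, if_neg hp']
    calc _ ≤ (R ^ p.toReal * J) ^ (1 / p.toReal) := ENNReal.rpow_le_rpow hint hr'.le
      _ = J ^ (1 / p.toReal) * R := by
        rw [ENNReal.mul_rpow_of_nonneg _ _ hr'.le, ← ENNReal.rpow_mul,
          mul_one_div_cancel hr.ne', ENNReal.rpow_one, mul_comm]
  · by_cases h0 : ∀ᵐ t ∂μ.restrict (Ioo a b), (eSup ν (Ioo a t) u)⁻¹ = 0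
    · -- The function `1 / U` is not admissible here, but then the integral vanishes.
      have hz : ∫⁻ x in Ioo a b, (w x / eSup ν (Ioo a x) u) ^ p.toReal ∂μ = 0 := by
        rw [← lintegral_zero (μ := μ.restrict (Ioo a b))]
        refine lintegral_congr_ae ?_
        filter_upwards [h0] with t ht
        simp [div_eq_mul_inv, ht, hr]
      rw [hz, ENNReal.zero_rpow_of_pos hr']
      exact zero_le
    · refine le_trans ?_ (le_sSup ⟨_, hU.inv, h0, rfl⟩)
      have hN : Nrm p μ (Ioo a b) (fun t => (eSup ν (Ioo a t) u)⁻¹ * w t) =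
          (∫⁻ x in Ioo a b, (w x / eSup ν (Ioo a x) u) ^ p.toReal ∂μ) ^ (1 / p.toReal) := by
        rw [Nrm, if_neg hp']
        simp only [div_eq_mul_inv, mul_comm]
      refine le_trans ?_ (ENNReal.div_le_div_left (RHSsup_inv_le_one a b μ ν u) _)
      rw [div_one]
      exact hN.ge
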